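/- Let n ≥ 1, let f : ℝⁿ → ℂ be a Schwartz function, fix an index k with 1 ≤ k ≤ n, and let 𝓕f denote the Fourier transform of f with the convention 𝓕f(ξ) = ∫_{ℝⁿ} e^{−2πi⟨x,ξ⟩} f(x) dx. Then (∫_{ℝⁿ} |x_k|² |f(x)|² dx)^{1/2} · (∫_{ℝⁿ} |ξ_k|² |𝓕f(ξ)|² dξ)^{1/2} ≥ (1/(4π)) ∫_{ℝⁿ} |f(x)|² dx. Equivalently, ‖x_k f‖_{L²} · ‖ξ_k 𝓕f‖_{L²} ≥ (1/(4π)) ‖f‖_{L²}². -/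

import Mathlib

open MeasureTheory
open scoped FourierTransform

/-!
Multiplication by `⟪u, x⟫` and the derivative `∂_v` have commutator `⟪u, v⟫`. Integrating
by parts, this reads `⟪u, v⟫ ‖f‖² = -2 Re ⟪⟪u, x⟫ f, ∂_v f⟫` in `L²`, and Cauchy–Schwarz bounds the
right-hand side. By Plancherel, `‖∂_v f‖ = 2π ‖⟪ξ, v⟫ 𝓕f‖`, whence the constant `1 / (4π)`.
-/

open scoped LineDeriv SchwartzMap

section CauchySchwarz

variable {α 𝕜 E : Type*} [MeasurableSpace α] {μ : Measure α} [RCLike 𝕜]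
  [NormedAddCommGroup E] [InnerProductSpace 𝕜 E]

theorem norm_integral_inner_le_sqrt_mul_sqrt {f g : α → E} (hf : MemLp f 2 μ) (hg : MemLp g 2 μ) :
    ‖∫ x, inner 𝕜 (f x) (g x) ∂μ‖ ≤ √(∫ x, ‖f x‖ ^ 2 ∂μ) * √(∫ x, ‖g x‖ ^ 2 ∂μ) := by
  have holder : ∫ x, ‖f x‖ * ‖g x‖ ∂μ ≤ √(∫ x, ‖f x‖ ^ 2 ∂μ) * √(∫ x, ‖g x‖ ^ 2 ∂μ) := by
    simpa only [Real.rpow_two, ← Real.sqrt_eq_rpow] using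
      integral_mul_norm_le_Lp_mul_Lq Real.HolderConjugate.two_two
        (by simpa using hf) (by simpa using hg)
  exact (norm_integral_le_of_norm_le (hf.norm.integrable_mul hg.norm)
    (.of_forall fun x ↦ norm_inner_le_norm (f x) (g x))).trans holder

end CauchySchwarz

section ProductRule

variable {𝕜 V F : Type*} [RCLike 𝕜] [NormedAddCommGroup V] [NormedSpace ℝ V]
  [NormedAddCommGroup F] [NormedSpace ℝ F] [NormedSpace 𝕜 F]

theorem lineDerivOp_smulLeftCLM_apply {g : V → 𝕜} (hg : g.HasTemperateGrowth) (f : 𝓢(V, F))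
    (v x : V) :
    ∂_{v} (SchwartzMap.smulLeftCLM F g f) x = fderiv ℝ g x v • f x + g x • ∂_{v} f x := by
  have hgx : DifferentiableAt ℝ g x := hg.1.differentiable (by simp) x
  rw [SchwartzMap.lineDerivOp_apply_eq_fderiv, SchwartzMap.lineDerivOp_apply_eq_fderiv,
    SchwartzMap.smulLeftCLM_apply hg, fderiv_fun_smul hgx f.differentiableAt]
  simp [add_comm]

end ProductRule

section IntegrationByParts

variable {V F : Type*} [NormedAddCommGroup V] [NormedSpace ℝ V] [FiniteDimensional ℝ V]
  [MeasurableSpace V] [BorelSpace V] {μ : Measure V} [μ.IsAddHaarMeasure]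
  [NormedAddCommGroup F] [InnerProductSpace ℝ F]

theorem integral_fderiv_mul_norm_sq_eq {g : V → ℝ} (hg : g.HasTemperateGrowth) (f : 𝓢(V, F))
    (v : V) :
    ∫ x, fderiv ℝ g x v * ‖f x‖ ^ 2 ∂μ = -2 * ∫ x, inner ℝ (g x • f x) (∂_{v} f x) ∂μ := by
  let gf := SchwartzMap.smulLeftCLM F g f
  have gf_apply (x : V) : gf x = g x • f x := SchwartzMap.smulLeftCLM_apply_apply hg f x
  have by_parts : ∫ x, inner ℝ (gf x) (∂_{v} f x) ∂μ = -∫ x, inner ℝ (∂_{v} gf x) (f x) ∂μ :=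
    SchwartzMap.integral_bilinear_lineDerivOp_right_eq_neg_left gf f (innerSL ℝ) v
  have product_rule (x : V) : fderiv ℝ g x v * ‖f x‖ ^ 2 =
      inner ℝ (∂_{v} gf x) (f x) - inner ℝ (gf x) (∂_{v} f x) := by
    rw [lineDerivOp_smulLeftCLM_apply hg, gf_apply, inner_add_left, real_inner_smul_left,
      real_inner_smul_left, real_inner_smul_left, real_inner_self_eq_norm_sq,
      real_inner_comm (f x), add_sub_cancel_right]
  have integrable_inner (φ ψ : 𝓢(V, F)) : Integrable (fun x ↦ inner ℝ (φ x) (ψ x)) μ :=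
    (SchwartzMap.pairing (innerSL ℝ) φ ψ).integrable
  simp_rw [product_rule, ← gf_apply]
  rw [integral_sub (integrable_inner _ _) (integrable_inner _ _)]
  linarith

theorem abs_apply_mul_integral_norm_sq_le (L : V →L[ℝ] ℝ) (f : 𝓢(V, F)) (v : V) :
    |L v| * ∫ x, ‖f x‖ ^ 2 ∂μ ≤
      2 * (√(∫ x, |L x| ^ 2 * ‖f x‖ ^ 2 ∂μ) * √(∫ x, ‖∂_{v} f x‖ ^ 2 ∂μ)) := by
  have hL : (⇑L).HasTemperateGrowth := L.hasTemperateGrowth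
  have memLp_smul : MemLp (fun x ↦ L x • f x) 2 μ := by
    simpa only [SchwartzMap.smulLeftCLM_apply hL] using
      (SchwartzMap.smulLeftCLM F L f).memLp 2 μ
  have commutator : L v * ∫ x, ‖f x‖ ^ 2 ∂μ = -2 * ∫ x, inner ℝ (L x • f x) (∂_{v} f x) ∂μ := by
    simpa only [ContinuousLinearMap.fderiv, integral_const_mul] using
      integral_fderiv_mul_norm_sq_eq (μ := μ) hL f v
  calc |L v| * ∫ x, ‖f x‖ ^ 2 ∂μ
      = |L v * ∫ x, ‖f x‖ ^ 2 ∂μ| := by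
        rw [abs_mul, abs_of_nonneg (integral_nonneg fun x ↦ sq_nonneg ‖f x‖)]
    _ = 2 * ‖∫ x, inner ℝ (L x • f x) (∂_{v} f x) ∂μ‖ := by
        rw [commutator, abs_mul, abs_neg, abs_two, Real.norm_eq_abs]
    _ ≤ 2 * (√(∫ x, ‖L x • f x‖ ^ 2 ∂μ) * √(∫ x, ‖∂_{v} f x‖ ^ 2 ∂μ)) := by
        gcongr
        exact norm_integral_inner_le_sqrt_mul_sqrt memLp_smul ((∂_{v} f).memLp 2 μ)
    _ = 2 * (√(∫ x, |L x| ^ 2 * ‖f x‖ ^ 2 ∂μ) * √(∫ x, ‖∂_{v} f x‖ ^ 2 ∂μ)) := by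
        simp only [norm_smul, mul_pow, Real.norm_eq_abs]

end IntegrationByParts

section Fourier

variable {V : Type*} [NormedAddCommGroup V] [InnerProductSpace ℝ V] [FiniteDimensional ℝ V]
  [MeasurableSpace V] [BorelSpace V]

theorem norm_fourier_lineDerivOp_apply {E : Type*} [NormedAddCommGroup E] [NormedSpace ℂ E]
    (f : 𝓢(V, E)) (v ξ : V) :
    ‖𝓕 (∂_{v} f) ξ‖ = 2 * Real.pi * (|inner ℝ ξ v| * ‖𝓕 (⇑f) ξ‖) := by
  have hv : (fun x : V ↦ inner ℝ x v).HasTemperateGrowth := ((innerSL ℝ).flip v).hasTemperateGrowth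
  rw [SchwartzMap.fourier_lineDerivOp_eq, smul_apply,
    SchwartzMap.smulLeftCLM_apply_apply hv, norm_smul, norm_smul, SchwartzMap.fourier_coe]
  simp [abs_of_pos Real.pi_pos]

variable {H : Type*} [NormedAddCommGroup H] [InnerProductSpace ℂ H] [CompleteSpace H]

theorem sqrt_integral_norm_sq_lineDerivOp (f : 𝓢(V, H)) (v : V) :
    √(∫ x, ‖∂_{v} f x‖ ^ 2) =
      2 * Real.pi * √(∫ ξ, |inner ℝ ξ v| ^ 2 * ‖𝓕 (⇑f) ξ‖ ^ 2) := by
  rw [← SchwartzMap.integral_norm_sq_fourier]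
  simp_rw [norm_fourier_lineDerivOp_apply, mul_pow _ (_ * _), mul_pow |_|]
  rw [integral_const_mul, Real.sqrt_mul (by positivity), Real.sqrt_sq (by positivity)]

theorem sharp_clifford_stmt2_general (f : 𝓢(V, H)) (u v : V) :
    |inner ℝ u v| / (4 * Real.pi) * ∫ x, ‖f x‖ ^ 2 ≤
      √(∫ x, |inner ℝ u x| ^ 2 * ‖f x‖ ^ 2) *
        √(∫ ξ, |inner ℝ v ξ| ^ 2 * ‖𝓕 (⇑f) ξ‖ ^ 2) := by
  let : InnerProductSpace ℝ H := .complexToReal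
  have position_derivative := abs_apply_mul_integral_norm_sq_le (μ := volume) (innerSL ℝ u) f v
  rw [sqrt_integral_norm_sq_lineDerivOp] at position_derivative
  simp only [innerSL_apply_apply, real_inner_comm v] at position_derivative ⊢
  rw [div_mul_eq_mul_div, div_le_iff₀ (by positivity)]
  linarith

end Fourier

/-- Heisenberg uncertainty inequality for the Fourier transform (with the
`e^{-2πi⟨x,ξ⟩}` convention): `‖x_k f‖_{L²} * ‖ξ_k 𝓕f‖_{L²} ≥ (1/(4π)) * ‖f‖_{L²}²`. -/
theorem sharp_clifford_stmt2 {n : ℕ} (hn : 1 ≤ n)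
    (f : SchwartzMap (EuclideanSpace ℝ (Fin n)) ℂ) (k : Fin n) :
    Real.sqrt (∫ x : EuclideanSpace ℝ (Fin n), |x k| ^ 2 * ‖f x‖ ^ 2) *
      Real.sqrt (∫ ξ : EuclideanSpace ℝ (Fin n), |ξ k| ^ 2 * ‖𝓕 (⇑f) ξ‖ ^ 2)
    ≥ (1 / (4 * Real.pi)) * ∫ x : EuclideanSpace ℝ (Fin n), ‖f x‖ ^ 2 := by
  simpa [EuclideanSpace.inner_single_left] using
    sharp_clifford_stmt2_general f (EuclideanSpace.single k 1) (EuclideanSpace.single k 1)
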